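/- Let A be a finite-dimensional unital C*-algebra with a faithful trace τ. Then on the density space D_τ(A), the metric induced by the C*-norm and the Bures metric d_B^τ(x,y) = √(1 − τ(|√x √y|)) induce the same topology. -/

import Mathlib

open Filter Topology ComplexOrder

/-!
The forward direction is continuity of the square root on the positive cone.

For the converse, put `q = √y` and `a = √x q`. For every `ε > 0` an approximate polar
decomposition gives a contraction `w` with `w⋆ a` self-adjoint and `w⋆ a ≥ |a| - ε`
(`exists_approx_polar`). With `b = √x w`, traciality yields `τ (b⋆ b) ≤ τ x = 1`, hence
`τ ((b - q)⋆ (b - q)) ≤ 2 - 2 τ |a| + 2 ε τ 1`. So if the Bures distance from `x` to `y` is small,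
then `b` is close to `q` in the trace 2-norm. In finite dimension, compactness of the positive part
of the unit sphere makes a faithful trace dominate the norm on the positive cone
(`exists_norm_le_trace`), so `b` is close to `q` in norm and `b b⋆` is close to `q ^ 2 = y`.
Finally `x - b b⋆ ≥ 0` has trace `1 - τ (b b⋆)`, which is close to `1 - τ y = 0`, so `x` is close
to `b b⋆` as well.
-/

section Helpers

variable {A : Type*} [CStarAlgebra A] [PartialOrder A] [StarOrderedRing A]

/-- A faithful positive functional on a finite-dimensional C⋆-algebra controls the norm of
positive elements: it is bounded below on the compact set of positive elements of norm one. -/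
lemma exists_norm_le_trace [FiniteDimensional ℂ A] (τ : A →ₗ[ℂ] ℂ)
    (hpos : ∀ a : A, 0 ≤ a → 0 ≤ τ a)
    (hfaithful : ∀ a : A, 0 ≤ a → τ a = 0 → a = 0) :
    ∃ C : ℝ, ∀ a : A, 0 ≤ a → ‖a‖ ≤ C * (τ a).re := by
  have hcont : Continuous fun a : A => (τ a).re :=
    Complex.continuous_re.comp τ.continuous_of_finiteDimensional
  have : ProperSpace A := FiniteDimensional.proper ℂ A
  have hK : IsCompact ({a : A | 0 ≤ a} ∩ Metric.sphere 0 1) :=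
    (isCompact_sphere 0 1).inter_left CStarAlgebra.isClosed_nonneg
  have hre : ∀ a : A, 0 ≤ a → a ≠ 0 → 0 < (τ a).re := by
    intro a ha hne
    obtain ⟨h1, h2⟩ := Complex.le_def.1 (hpos a ha)
    refine lt_of_le_of_ne h1 fun h => hne (hfaithful a ha ?_)
    exact Complex.ext h.symm h2.symm
  obtain hemp | hne := ({a : A | 0 ≤ a} ∩ Metric.sphere 0 1).eq_empty_or_nonempty
  · refine ⟨0, fun a ha => ?_⟩
    by_cases h0 : a = 0
    · simp [h0]
    · exfalso
      have hmem : ((‖a‖⁻¹ : ℝ) • a) ∈ ({a : A | 0 ≤ a} ∩ Metric.sphere 0 1) :=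
        ⟨smul_nonneg (by positivity) ha, by simp [norm_smul, h0]⟩
      rw [hemp] at hmem
      exact hmem
  · obtain ⟨m, hm, hmin⟩ := hK.exists_isMinOn hne hcont.continuousOn
    have hm0 : m ≠ 0 := by
      rintro rfl
      simpa using hm.2
    have hmpos := hre m hm.1 hm0
    refine ⟨((τ m).re)⁻¹, fun a ha => ?_⟩
    by_cases h0 : a = 0
    · simp [h0]
    · have hn : 0 < ‖a‖ := norm_pos_iff.2 h0
      have hmem : ((‖a‖⁻¹ : ℝ) • a) ∈ ({a : A | 0 ≤ a} ∩ Metric.sphere 0 1) :=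
        ⟨smul_nonneg (by positivity) ha, by simp [norm_smul, h0]⟩
      have h := hmin hmem
      have e : (τ ((‖a‖⁻¹ : ℝ) • a)).re = ‖a‖⁻¹ * (τ a).re := by
        rw [← Complex.coe_smul, map_smul, smul_eq_mul, Complex.re_ofReal_mul]
      simp only [Set.mem_ofPred_eq, e] at h
      rw [inv_mul_eq_div, le_div_iff₀ hn] at h
      rw [inv_mul_eq_div, le_div_iff₀ hmpos]
      linarith

/-- Approximate polar decomposition: `w = a (|a| + ε)⁻¹` is a contraction for which `w⋆ a`
is self-adjoint and dominates `|a| - ε`. -/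
lemma exists_approx_polar (a : A) {ε : ℝ} (hε : 0 < ε) :
    ∃ w : A, w * star w ≤ 1 ∧ IsSelfAdjoint (star w * a) ∧
      CFC.sqrt (star a * a) ≤ star w * a + algebraMap ℝ A ε := by
  set s := CFC.sqrt (star a * a) with hs
  have hs0 : 0 ≤ s := CFC.sqrt_nonneg _
  have hss : s * s = star a * a := CFC.sqrt_mul_sqrt_self _ (star_mul_self_nonneg a)
  have hsa : IsSelfAdjoint s := .of_nonneg hs0
  have hspec : ∀ t ∈ spectrum ℝ s, 0 ≤ t := fun t ht => spectrum_nonneg_of_nonneg hs0 ht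
  set f : ℝ → ℝ := fun t => (t + ε)⁻¹ with hf
  have hfc : ContinuousOn f (spectrum ℝ s) := by
    refine ContinuousOn.inv₀ (by fun_prop) fun t ht => ?_
    have := hspec t ht
    positivity
  set g := cfc f s with hg
  have hgsa : star g = g := (cfc_predicate f s : IsSelfAdjoint _).star_eq
  have hid : cfc (fun t : ℝ => t) s = s := cfc_id' ℝ s
  have hgs : g * (s * s) = cfc (fun t => f t * (t * t)) s := by
    rw [cfc_mul f (fun t => t * t) s, cfc_mul (fun t : ℝ => t) (fun t => t) s, hid]
  have hwa : star (a * g) * a = g * (s * s) := by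
    rw [star_mul, hgsa, hss, mul_assoc]
  have hww : star (a * g) * (a * g) ≤ 1 := by
    have : star (a * g) * (a * g) = cfc (fun t => f t * (t * t) * f t) s := by
      rw [← mul_assoc, hwa, hgs, cfc_mul (fun t => f t * (t * t)) f s]
    rw [this]
    refine cfc_le_one _ _ fun t ht => ?_
    have h0 := hspec t ht
    have h1 : f t * t ≤ 1 := by
      simp only [hf]
      rw [inv_mul_le_iff₀ (by positivity)]
      linarith
    have h2 : 0 ≤ f t * t := by positivity
    nlinarith
  refine ⟨a * g, ?_, ?_, ?_⟩
  · rw [← CStarAlgebra.norm_le_one_iff_of_nonneg _ (mul_star_self_nonneg _),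
      CStarRing.norm_self_mul_star, ← CStarRing.norm_star_mul_self,
      CStarAlgebra.norm_le_one_iff_of_nonneg _ (star_mul_self_nonneg _)]
    exact hww
  · rw [hwa, hgs]
    exact cfc_predicate _ s
  · rw [hwa, hgs, ← cfc_const ε s, ← cfc_add s (fun t => f t * (t * t)) (fun _ => ε)]
    conv_lhs => rw [← hid]
    refine cfc_mono fun t ht => ?_
    have h0 := hspec t ht
    have hp : 0 < t + ε := by positivity
    simp only [hf]
    -- `t ^ 2 / (t + ε) = t - ε + ε ^ 2 / (t + ε)`
    rw [inv_mul_eq_div, ← sub_le_iff_le_add, le_div_iff₀ hp]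
    nlinarith

/-- The quantitative core: a positive `x` of trace one admits `b` with `b b⋆ ≤ x` whose trace
2-norm distance to `√y` is bounded by the Bures distance from `x` to `y`, up to `ε`. -/
lemma exists_close_root (τ : A →ₗ[ℂ] ℂ) (hpos : ∀ a : A, 0 ≤ a → 0 ≤ τ a)
    (htrace : ∀ a b : A, τ (a * b) = τ (b * a)) {x y : A} (hx : 0 ≤ x) (hx1 : τ x = 1)
    (hy : 0 ≤ y) (hy1 : τ y = 1) {ε : ℝ} (hε : 0 < ε) :
    ∃ b : A, b * star b ≤ x ∧
      (τ (star (b - CFC.sqrt y) * (b - CFC.sqrt y))).re ≤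
        2 * (1 - (τ (CFC.sqrt (star (CFC.sqrt x * CFC.sqrt y)
          * (CFC.sqrt x * CFC.sqrt y)))).re) + 2 * (ε * (τ 1).re) := by
  have hmono : ∀ a b : A, a ≤ b → (τ a).re ≤ (τ b).re := by
    intro a b hab
    have := (Complex.le_def.1 (hpos _ (sub_nonneg.2 hab))).1
    simp only [map_sub, Complex.zero_re, Complex.sub_re] at this
    linarith
  set p := CFC.sqrt x with hp
  set q := CFC.sqrt y with hq
  have hpp : p * p = x := CFC.sqrt_mul_sqrt_self x hx
  have hqq : q * q = y := CFC.sqrt_mul_sqrt_self y hy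
  have hps : star p = p := (IsSelfAdjoint.of_nonneg (CFC.sqrt_nonneg x)).star_eq
  have hqs : star q = q := (IsSelfAdjoint.of_nonneg (CFC.sqrt_nonneg y)).star_eq
  obtain ⟨w, hw, hsa, hle⟩ := exists_approx_polar (p * q) hε
  have hbb : p * w * star (p * w) ≤ x := by
    have := star_left_conjugate_le_conjugate hw p
    rw [hps, mul_one, hpp] at this
    simpa [star_mul, hps, mul_assoc] using this
  refine ⟨p * w, hbb, ?_⟩
  have h1 : star (p * w) * q = star w * (p * q) := by rw [star_mul, hps, mul_assoc]
  have h2 : q * (p * w) = star w * (p * q) := by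
    rw [← hsa.star_eq, star_mul, star_mul, star_star, hps, hqs, mul_assoc]
  have hexp : star (p * w - q) * (p * w - q)
      = star (p * w) * (p * w) - star w * (p * q) - star w * (p * q) + y := by
    rw [star_sub, hqs, sub_mul, mul_sub, mul_sub, h1, h2, hqq]
    abel
  have hb1 := hmono _ _ hbb
  have hF := hmono _ _ hle
  have hε1 : (τ (algebraMap ℝ A ε)).re = ε * (τ 1).re := by
    rw [Algebra.algebraMap_eq_smul_one, ← Complex.coe_smul, map_smul, smul_eq_mul,
      Complex.re_ofReal_mul]
  rw [htrace, hx1] at hb1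
  rw [hexp]
  simp only [map_add, map_sub, Complex.add_re, Complex.sub_re, hy1, hε1, Complex.one_re]
    at hb1 hF ⊢
  linarith

end Helpers

/-- Let `A` be a finite-dimensional unital C*-algebra with a faithful
trace `τ`.  Then on the density space `D_τ(A)` the C*-norm metric and the Bures metric
`d_B^τ(x,y) = √(1 − τ(|√x √y|))` induce the same topology: a sequence in `D_τ(A)`
converges in norm iff it converges in the Bures metric (to the same limit). -/
theorem bures_norm_topologically_equivalent_fd
    {A : Type*} [CStarAlgebra A] [PartialOrder A] [StarOrderedRing A]
    [FiniteDimensional ℂ A]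
    (τ : A →ₗ[ℂ] ℂ)
    (hpos : ∀ a : A, 0 ≤ a → 0 ≤ τ a)
    (htrace : ∀ a b : A, τ (a * b) = τ (b * a))
    (hfaithful : ∀ a : A, 0 ≤ a → τ a = 0 → a = 0) :
    ∀ (x : ℕ → A) (xlim : A), (∀ n, 0 ≤ x n) → (∀ n, τ (x n) = 1) →
      0 ≤ xlim → τ xlim = 1 →
      (Tendsto x atTop (𝓝 xlim) ↔
        Tendsto (fun n => Real.sqrt (1 - (τ (CFC.sqrt
            (star (CFC.sqrt (x n) * CFC.sqrt xlim)
              * (CFC.sqrt (x n) * CFC.sqrt xlim)))).re)) atTop (𝓝 0)) := by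
  intro x y hx hx1 hy hy1
  have hτ : Continuous fun a : A => (τ a).re :=
    Complex.continuous_re.comp τ.continuous_of_finiteDimensional
  have hqq : CFC.sqrt y * CFC.sqrt y = y := CFC.sqrt_mul_sqrt_self y hy
  have hqs : star (CFC.sqrt y) = CFC.sqrt y :=
    (IsSelfAdjoint.of_nonneg (CFC.sqrt_nonneg y)).star_eq
  have hsqrt : ∀ {u : ℕ → A} {v : A}, (∀ n, 0 ≤ u n) → 0 ≤ v → Tendsto u atTop (𝓝 v) →
      Tendsto (fun n => CFC.sqrt (u n)) atTop (𝓝 (CFC.sqrt v)) := fun hu hv h =>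
    (CFC.continuousOn_sqrt _ hv).tendsto.comp
      (tendsto_nhdsWithin_iff.2 ⟨h, Eventually.of_forall hu⟩)
  constructor
  · intro h
    have h1 : Tendsto (fun n => CFC.sqrt (x n) * CFC.sqrt y) atTop (𝓝 y) := by
      simpa only [hqq] using (hsqrt hx hy h).mul_const (CFC.sqrt y)
    have h2 := hsqrt (fun n => star_mul_self_nonneg _) (star_mul_self_nonneg _) (h1.star.mul h1)
    rw [(IsSelfAdjoint.of_nonneg hy).star_eq, CFC.sqrt_mul_self y hy] at h2
    have h3 := (((hτ.tendsto y).comp h2).const_sub 1).sqrt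
    simpa [hy1] using h3
  · intro h
    set F : ℕ → ℝ := fun n => (τ (CFC.sqrt (star (CFC.sqrt (x n) * CFC.sqrt y)
      * (CFC.sqrt (x n) * CFC.sqrt y)))).re with hF
    have hF0 : Tendsto (fun n => √(1 - F n)) atTop (𝓝 0) := h
    obtain ⟨C, hC⟩ := exists_norm_le_trace τ hpos hfaithful
    choose b hbx hbq using fun n : ℕ =>
      exists_close_root τ hpos htrace (hx n) (hx1 n) hy hy1 (Nat.one_div_pos_of_nat (α := ℝ) (n := n))
    have htr : Tendsto (fun n => (τ (star (b n - CFC.sqrt y) * (b n - CFC.sqrt y))).re)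
        atTop (𝓝 0) := by
      have hup : Tendsto (fun n : ℕ => 2 * (√(1 - F n)) ^ 2 + 2 * (1 / ((n : ℝ) + 1) * (τ 1).re))
          atTop (𝓝 0) := by
        simpa using ((hF0.pow 2).const_mul 2).add
          (((tendsto_one_div_add_atTop_nhds_zero_nat (𝕜 := ℝ)).mul_const (τ 1).re).const_mul 2)
      refine squeeze_zero (fun n => (Complex.le_def.1 (hpos _ (star_mul_self_nonneg _))).1)
        (fun n => (hbq n).trans ?_) hup
      -- the square root vanishes where `1 - F n` is negative, hence only an inequality
      have : 1 - F n ≤ √(1 - F n) ^ 2 := by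
        rw [Real.sq_sqrt']
        exact le_max_left _ _
      simp only [hF] at this ⊢
      linarith
    have hb : Tendsto b atTop (𝓝 (CFC.sqrt y)) := by
      have hsq : Tendsto (fun n => ‖b n - CFC.sqrt y‖ * ‖b n - CFC.sqrt y‖) atTop (𝓝 0) := by
        refine squeeze_zero (fun n => by positivity) (fun n => ?_)
          (by simpa only [mul_zero] using htr.const_mul C)
        rw [← CStarRing.norm_star_mul_self]
        exact hC _ (star_mul_self_nonneg _)
      rw [tendsto_iff_norm_sub_tendsto_zero]
      simpa using hsq.sqrt
    have hbb : Tendsto (fun n => b n * star (b n)) atTop (𝓝 y) := by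
      simpa only [hqs, hqq] using hb.mul hb.star
    have hdiff : Tendsto (fun n => x n - b n * star (b n)) atTop (𝓝 0) := by
      have ht : Tendsto (fun n => C * (τ (x n - b n * star (b n))).re) atTop (𝓝 0) := by
        have := (((hτ.tendsto y).comp hbb).const_sub 1).const_mul C
        simpa [hy1, hx1] using this
      exact squeeze_zero_norm (fun n => hC _ (sub_nonneg.2 (hbx n))) ht
    simpa using hdiff.add hbb
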